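/- Let a, b ∈ ℂ with a ∉ ℤ or a = 0. Then the 𝔤-module R_{a,b} is not simple if and only if a = 0 and b = 1, or a = 0 and b = 1/2. -/

import Mathlib

open Submodule

/-- A module over the `N = 2` Ramond algebra `𝔤`: a `ℤ/2`-graded complex vector
space `V = even ⊕ odd` with parity-preserving operators `L m`, `H m`,
parity-reversing operators `Gp m` (`G_m^+`), `Gm m` (`G_m^-`), and a scalar `c₀`
(the action of the central element `C`), subject to the defining relations. -/
structure RamondRep (V : Type) [AddCommGroup V] [Module ℂ V] : Type where
  L : ℤ → V →ₗ[ℂ] V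
  H : ℤ → V →ₗ[ℂ] V
  Gp : ℤ → V →ₗ[ℂ] V
  Gm : ℤ → V →ₗ[ℂ] V
  c₀ : ℂ
  even : Submodule ℂ V
  odd : Submodule ℂ V
  grading : IsCompl even odd
  L_even : ∀ (m : ℤ), ∀ v ∈ even, L m v ∈ even
  L_odd : ∀ (m : ℤ), ∀ v ∈ odd, L m v ∈ odd
  H_even : ∀ (m : ℤ), ∀ v ∈ even, H m v ∈ even
  H_odd : ∀ (m : ℤ), ∀ v ∈ odd, H m v ∈ odd
  Gp_even : ∀ (m : ℤ), ∀ v ∈ even, Gp m v ∈ odd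
  Gp_odd : ∀ (m : ℤ), ∀ v ∈ odd, Gp m v ∈ even
  Gm_even : ∀ (m : ℤ), ∀ v ∈ even, Gm m v ∈ odd
  Gm_odd : ∀ (m : ℤ), ∀ v ∈ odd, Gm m v ∈ even
  rel_LL : ∀ (m n : ℤ) (v : V),
    L m (L n v) - L n (L m v) =
      ((n : ℂ) - (m : ℂ)) • L (m + n) v +
        ((1 / 12 : ℂ) * ((n : ℂ) ^ 3 - (n : ℂ)) *
          (if m + n = 0 then (1 : ℂ) else 0) * c₀) • v
  rel_HH : ∀ (m n : ℤ) (v : V),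
    H m (H n v) - H n (H m v) =
      ((1 / 3 : ℂ) * (m : ℂ) * (if m + n = 0 then (1 : ℂ) else 0) * c₀) • v
  rel_LH : ∀ (m n : ℤ) (v : V),
    L m (H n v) - H n (L m v) = (n : ℂ) • H (m + n) v
  rel_LGp : ∀ (m p : ℤ) (v : V),
    L m (Gp p v) - Gp p (L m v) = ((p : ℂ) - (m : ℂ) / 2) • Gp (p + m) v
  rel_LGm : ∀ (m p : ℤ) (v : V),
    L m (Gm p v) - Gm p (L m v) = ((p : ℂ) - (m : ℂ) / 2) • Gm (p + m) v
  rel_HGp : ∀ (m p : ℤ) (v : V),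
    H m (Gp p v) - Gp p (H m v) = Gp (m + p) v
  rel_HGm : ∀ (m p : ℤ) (v : V),
    H m (Gm p v) - Gm p (H m v) = -(Gm (m + p) v)
  rel_GpGm : ∀ (p q : ℤ) (v : V),
    Gp p (Gm q v) + Gm q (Gp p v) =
      (-2 : ℂ) • L (p + q) v + ((p : ℂ) - (q : ℂ)) • H (p + q) v +
        ((1 / 3 : ℂ) * ((p : ℂ) ^ 2 - 1 / 4) *
          (if p + q = 0 then (1 : ℂ) else 0) * c₀) • v
  rel_GpGp : ∀ (p q : ℤ) (v : V), Gp p (Gp q v) + Gp q (Gp p v) = 0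
  rel_GmGm : ∀ (p q : ℤ) (v : V), Gm p (Gm q v) + Gm q (Gm p v) = 0

namespace RamondRep

variable {V : Type} [AddCommGroup V] [Module ℂ V]

/-- The weight space `V_μ = {v ∈ V : L₀ v = μ v}`. -/
def wt (ρ : RamondRep V) (μ : ℂ) : Submodule ℂ V :=
  Module.End.eigenspace (ρ.L 0) μ

/-- The parity components, indexed by `ZMod 2`. -/
def parity (ρ : RamondRep V) (τ : ZMod 2) : Submodule ℂ V :=
  if τ = 0 then ρ.even else ρ.odd

/-- `V` is a weight module: it is the sum of its weight spaces. -/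
def IsWeight (ρ : RamondRep V) : Prop := (⨆ μ : ℂ, ρ.wt μ) = ⊤

/-- `V` is cuspidal: a weight module with uniformly bounded weight multiplicities
in each parity. -/
def Cuspidal (ρ : RamondRep V) : Prop :=
  ρ.IsWeight ∧ ∃ p : ℕ, ∀ (μ : ℂ) (τ : ZMod 2),
    Module.rank ℂ ↥(ρ.wt μ ⊓ ρ.parity τ) ≤ (p : Cardinal)

/-- A subspace invariant under all the operators. -/
def IsSubmod (ρ : RamondRep V) (W : Submodule ℂ V) : Prop :=
  (∀ (m : ℤ), ∀ v ∈ W, ρ.L m v ∈ W) ∧ (∀ (m : ℤ), ∀ v ∈ W, ρ.H m v ∈ W) ∧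
    (∀ (m : ℤ), ∀ v ∈ W, ρ.Gp m v ∈ W) ∧ (∀ (m : ℤ), ∀ v ∈ W, ρ.Gm m v ∈ W)

/-- A graded subspace invariant under all the operators. -/
def IsGradedSubmod (ρ : RamondRep V) (W : Submodule ℂ V) : Prop :=
  ρ.IsSubmod W ∧ W = (W ⊓ ρ.even) ⊔ (W ⊓ ρ.odd)

/-- The trivial representation: all operators act by zero. -/
def IsTrivialRep (ρ : RamondRep V) : Prop :=
  ∀ (m : ℤ) (v : V), ρ.L m v = 0 ∧ ρ.H m v = 0 ∧ ρ.Gp m v = 0 ∧ ρ.Gm m v = 0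

/-- `V` is simple: nontrivial, and its only graded submodules are `⊥` and `⊤`. -/
def IsSimple (ρ : RamondRep V) : Prop :=
  ¬ ρ.IsTrivialRep ∧
    ∀ W : Submodule ℂ V, ρ.IsGradedSubmod W → W = ⊥ ∨ W = ⊤

/-- `V` is generated by `v` as a `𝔤`-module. -/
def GeneratedBy (ρ : RamondRep V) (v : V) : Prop :=
  ∀ W : Submodule ℂ V, ρ.IsSubmod W → v ∈ W → W = ⊤

/-- `V` is a highest weight module. -/
def IsHighestWeight (ρ : RamondRep V) : Prop :=
  ∃ v : V, v ≠ 0 ∧ ρ.GeneratedBy v ∧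
    (∃ h h' : ℂ, ρ.L 0 v = h • v ∧ ρ.H 0 v = h' • v) ∧
    (∀ m : ℤ, 0 < m → ρ.L m v = 0 ∧ ρ.H m v = 0 ∧ ρ.Gp m v = 0 ∧ ρ.Gm m v = 0) ∧
    ρ.Gp 0 v = 0

/-- `V` is a lowest weight module. -/
def IsLowestWeight (ρ : RamondRep V) : Prop :=
  ∃ v : V, v ≠ 0 ∧ ρ.GeneratedBy v ∧
    (∃ h h' : ℂ, ρ.L 0 v = h • v ∧ ρ.H 0 v = h' • v) ∧
    (∀ m : ℤ, m < 0 → ρ.L m v = 0 ∧ ρ.H m v = 0 ∧ ρ.Gp m v = 0 ∧ ρ.Gm m v = 0) ∧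
    ρ.Gm 0 v = 0

end RamondRep

/-- The family `(vp i)ᵢ` (even) and `(vm i)ᵢ` (odd) realizes the `𝔤`-module
`R_{a,b}` inside `(W, σ)`: the `vp i, vm i` form a basis, span the even/odd
parts respectively, `c₀ = 0`, and the action is given by the `R_{a,b}` formulas. -/
def RamondRep.IsRab {W : Type} [AddCommGroup W] [Module ℂ W] (σ : RamondRep W)
    (vp vm : ℤ → W) (a b : ℂ) : Prop :=
  σ.c₀ = 0 ∧
  LinearIndependent ℂ (fun x : Bool × ℤ => if x.1 then vm x.2 else vp x.2) ∧
  Submodule.span ℂ (Set.range vp ∪ Set.range vm) = ⊤ ∧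
  σ.even = Submodule.span ℂ (Set.range vp) ∧
  σ.odd = Submodule.span ℂ (Set.range vm) ∧
  (∀ m i : ℤ, σ.L m (vp i) = (a + (i : ℂ) + b * (m : ℂ)) • vp (m + i)) ∧
  (∀ m i : ℤ, σ.L m (vm i) = (a + (i : ℂ) + (b - 1 / 2) * (m : ℂ)) • vm (m + i)) ∧
  (∀ m i : ℤ, σ.H m (vp i) = (2 - 2 * b) • vp (m + i)) ∧
  (∀ m i : ℤ, σ.H m (vm i) = (1 - 2 * b) • vm (m + i)) ∧
  (∀ m i : ℤ, σ.Gm m (vp i) = vm (m + i)) ∧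
  (∀ m i : ℤ, σ.Gp m (vm i) =
    (-(2 * a + (4 * b - 2) * (m : ℂ) + 2 * (i : ℂ))) • vp (m + i)) ∧
  (∀ m i : ℤ, σ.Gp m (vp i) = 0) ∧
  (∀ m i : ℤ, σ.Gm m (vm i) = 0)

/-!
`L 0` acts on `v_i^±` by the scalar `a + i`, so an `L 0`-stable subspace containing a nonzero
combination of the `v_i^+` (or of the `v_i^-`) contains one of these vectors. The operators `G_m^-`
lead from `v_i^+` to every `v_k^-`, and `G_m^+` leads back with coefficient
`-2 (a + i + (2b - 1) m)`: some `v_j^+` is reached from `v_i^-` unless `b = 1/2` and `a + i = 0`,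
and `v_k^+` is reached from some `v_i^-` unless `b = 1` and `a + k = 0`. In the two exceptional
cases with `a = k ∈ ℤ`, the line through `v_{-k}^-` and the span of all basis vectors except
`v_{-k}^+`, respectively, are submodules.
-/

section Eigenvectors

variable {K V ι : Type*} [Field K] [AddCommGroup V] [Module K V] {f : Module.End K V} {μ : ι → K}
  {p : Submodule K V}

theorem mem_of_sum_mem_of_mem_eigenspace (hμ : Function.Injective μ) (hp : p ∈ f.invtSubmodule)
    {x : ι → V} (hx : ∀ i, x i ∈ f.eigenspace (μ i)) {s : Finset ι} (hs : ∑ i ∈ s, x i ∈ p)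
    {i : ι} (hi : i ∈ s) : x i ∈ p := by
  -- In `V ⧸ p` the classes of the `x i` are eigenvectors for distinct eigenvalues with sum `0`.
  let g : Module.End K (V ⧸ p) := p.mapQ p f hp
  have class_mem (j : ι) : p.mkQ (x j) ∈ g.eigenspace (μ j) :=
    Module.End.mem_eigenspace_iff.2 <| calc
      g (p.mkQ (x j)) = p.mkQ (f (x j)) := p.mapQ_apply p f _
      _ = μ j • p.mkQ (x j) := by rw [Module.End.mem_eigenspace_iff.1 (hx j), map_smul]
  have sum_eq_zero : ∑ j ∈ s, p.mkQ (x j) = 0 := by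
    rwa [← map_sum, mkQ_apply, Quotient.mk_eq_zero]
  have class_eq_zero := (iSupIndep_iff_finsetSum_eq_zero_imp_eq_zero _).1
    (g.eigenspaces_iSupIndep.comp hμ) s _ (fun j _ => class_mem j) sum_eq_zero i hi
  rwa [mkQ_apply, Quotient.mk_eq_zero] at class_eq_zero

theorem exists_mem_of_inf_span_range_ne_bot (hμ : Function.Injective μ)
    (hp : p ∈ f.invtSubmodule) {v : ι → V} (hv : ∀ i, v i ∈ f.eigenspace (μ i))
    (h : p ⊓ span K (Set.range v) ≠ ⊥) : ∃ i, v i ∈ p := by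
  obtain ⟨x, ⟨hxp, hxv⟩, hx⟩ := exists_mem_ne_zero_of_ne_bot h
  obtain ⟨c, rfl⟩ := Finsupp.mem_span_range_iff_exists_finsupp.1 hxv
  obtain ⟨i, hi, -⟩ := Finset.exists_ne_zero_of_sum_ne_zero hx
  have := mem_of_sum_mem_of_mem_eigenspace hμ hp (fun j => smul_mem _ (c j) (hv j)) hxp hi
  exact ⟨i, (p.smul_mem_iff (Finsupp.mem_support_iff.1 hi)).1 this⟩

end Eigenvectors

theorem exists_int_add_mul_ne_zero {R : Type*} [Ring R] {x y : R} (h : x = 0 → y ≠ 0) :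
    ∃ m : ℤ, x + y * m ≠ 0 := by
  by_cases hx : x = 0
  · exact ⟨1, by simpa [hx] using h hx⟩
  · exact ⟨0, by simpa using hx⟩

namespace RamondRep

theorem isGradedSubmod_span {V : Type} [AddCommGroup V] [Module ℂ V] (ρ : RamondRep V) {s : Set V}
    (hs : s ⊆ ρ.even ∪ ρ.odd) (hL : ∀ m, ∀ v ∈ s, ρ.L m v ∈ span ℂ s)
    (hH : ∀ m, ∀ v ∈ s, ρ.H m v ∈ span ℂ s) (hGp : ∀ m, ∀ v ∈ s, ρ.Gp m v ∈ span ℂ s)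
    (hGm : ∀ m, ∀ v ∈ s, ρ.Gm m v ∈ span ℂ s) : ρ.IsGradedSubmod (span ℂ s) := by
  have stable (f : V →ₗ[ℂ] V) (hf : ∀ v ∈ s, f v ∈ span ℂ s) : span ℂ s ≤ (span ℂ s).comap f :=
    span_le.2 hf
  refine ⟨⟨fun m => stable _ (hL m), fun m => stable _ (hH m), fun m => stable _ (hGp m),
    fun m => stable _ (hGm m)⟩, le_antisymm (span_le.2 fun v hv => ?_) ?_⟩
  · exact (hs hv).elim (fun h => mem_sup_left ⟨subset_span hv, h⟩)
      fun h => mem_sup_right ⟨subset_span hv, h⟩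
  · exact sup_le inf_le_left inf_le_left

namespace IsRab

variable {W : Type} [AddCommGroup W] [Module ℂ W] {σ : RamondRep W} {vp vm : ℤ → W} {a b : ℂ}

theorem linearIndependent (h : σ.IsRab vp vm a b) :
    LinearIndependent ℂ fun x : Bool × ℤ => if x.1 then vm x.2 else vp x.2 :=
  h.2.1

theorem span_eq_top (h : σ.IsRab vp vm a b) : span ℂ (Set.range vp ∪ Set.range vm) = ⊤ :=
  h.2.2.1

theorem even_eq (h : σ.IsRab vp vm a b) : σ.even = span ℂ (Set.range vp) :=
  h.2.2.2.1

theorem odd_eq (h : σ.IsRab vp vm a b) : σ.odd = span ℂ (Set.range vm) :=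
  h.2.2.2.2.1

theorem L_vp (h : σ.IsRab vp vm a b) (m i : ℤ) : σ.L m (vp i) = (a + i + b * m) • vp (m + i) :=
  h.2.2.2.2.2.1 m i

theorem L_vm (h : σ.IsRab vp vm a b) (m i : ℤ) :
    σ.L m (vm i) = (a + i + (b - 1 / 2) * m) • vm (m + i) :=
  h.2.2.2.2.2.2.1 m i

theorem H_vp (h : σ.IsRab vp vm a b) (m i : ℤ) : σ.H m (vp i) = (2 - 2 * b) • vp (m + i) :=
  h.2.2.2.2.2.2.2.1 m i

theorem H_vm (h : σ.IsRab vp vm a b) (m i : ℤ) : σ.H m (vm i) = (1 - 2 * b) • vm (m + i) :=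
  h.2.2.2.2.2.2.2.2.1 m i

theorem Gm_vp (h : σ.IsRab vp vm a b) (m i : ℤ) : σ.Gm m (vp i) = vm (m + i) :=
  h.2.2.2.2.2.2.2.2.2.1 m i

theorem Gp_vm (h : σ.IsRab vp vm a b) (m i : ℤ) :
    σ.Gp m (vm i) = (-(2 * a + (4 * b - 2) * m + 2 * i)) • vp (m + i) :=
  h.2.2.2.2.2.2.2.2.2.2.1 m i

theorem Gp_vp (h : σ.IsRab vp vm a b) (m i : ℤ) : σ.Gp m (vp i) = 0 :=
  h.2.2.2.2.2.2.2.2.2.2.2.1 m i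

theorem Gm_vm (h : σ.IsRab vp vm a b) (m i : ℤ) : σ.Gm m (vm i) = 0 :=
  h.2.2.2.2.2.2.2.2.2.2.2.2 m i

theorem vp_mem_even (h : σ.IsRab vp vm a b) (i : ℤ) : vp i ∈ σ.even :=
  h.even_eq ▸ subset_span ⟨i, rfl⟩

theorem vm_mem_odd (h : σ.IsRab vp vm a b) (i : ℤ) : vm i ∈ σ.odd :=
  h.odd_eq ▸ subset_span ⟨i, rfl⟩

theorem vm_ne_zero (h : σ.IsRab vp vm a b) (i : ℤ) : vm i ≠ 0 :=
  h.linearIndependent.ne_zero (true, i)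

theorem vp_notMem_span (h : σ.IsRab vp vm a b) (j : ℤ) :
    vp j ∉ span ℂ (Set.range vm ∪ vp '' {j}ᶜ) := by
  refine fun hj => h.linearIndependent.notMem_span_image (s := {(false, j)}ᶜ) (x := (false, j))
    (by simp) (span_mono ?_ hj)
  rintro _ (⟨i, rfl⟩ | ⟨i, hi, rfl⟩)
  · exact ⟨(true, i), by simp, rfl⟩
  · exact ⟨(false, i), by simpa using hi, rfl⟩

theorem not_isTrivialRep (h : σ.IsRab vp vm a b) : ¬ σ.IsTrivialRep := fun ht =>
  h.vm_ne_zero (0 + 0) (h.Gm_vp 0 0 ▸ (ht 0 (vp 0)).2.2.2)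

section Simple

variable {S : Submodule ℂ W}

theorem exists_mem_of_ne_bot (h : σ.IsRab vp vm a b) (hS : σ.IsGradedSubmod S) (hbot : S ≠ ⊥) :
    (∃ i, vp i ∈ S) ∨ ∃ i, vm i ∈ S := by
  have weight_injective : Function.Injective fun i : ℤ => a + i := fun i j hij => by
    simpa using hij
  have stable : S ∈ Module.End.invtSubmodule (σ.L 0) := hS.1.1 0
  have part_ne_bot : S ⊓ σ.even ≠ ⊥ ∨ S ⊓ σ.odd ≠ ⊥ := by
    by_contra! hparts
    exact hbot (by rw [hS.2, hparts.1, hparts.2, sup_bot_eq])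
  rw [h.even_eq, h.odd_eq] at part_ne_bot
  exact part_ne_bot.imp
    (exists_mem_of_inf_span_range_ne_bot weight_injective stable fun i =>
      Module.End.mem_eigenspace_iff.2 (by simp [h.L_vp]))
    (exists_mem_of_inf_span_range_ne_bot weight_injective stable fun i =>
      Module.End.mem_eigenspace_iff.2 (by simp [h.L_vm]))

theorem vm_mem_of_vp_mem (h : σ.IsRab vp vm a b) (hS : σ.IsSubmod S) {i : ℤ} (hi : vp i ∈ S)
    (k : ℤ) : vm k ∈ S := by
  simpa [h.Gm_vp] using hS.2.2.2 (k - i) _ hi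

theorem vp_mem_of_vm_mem (h : σ.IsRab vp vm a b) (hS : σ.IsSubmod S) {m i : ℤ} (hi : vm i ∈ S)
    (hc : a + i + (2 * b - 1) * m ≠ 0) : vp (m + i) ∈ S := by
  have hGp := hS.2.2.1 m _ hi
  rw [h.Gp_vm] at hGp
  refine (S.smul_mem_iff fun h0 => hc ?_).1 hGp
  linear_combination -h0 / 2

theorem exists_vp_mem_of_vm_mem (h : σ.IsRab vp vm a b) (hS : σ.IsSubmod S) {i : ℤ}
    (hi : vm i ∈ S) (hab : a + i = 0 → b ≠ 1 / 2) : ∃ j, vp j ∈ S := by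
  obtain ⟨m, hm⟩ := exists_int_add_mul_ne_zero (x := a + i) (y := 2 * b - 1)
    fun ha hb => hab ha (by linear_combination hb / 2)
  exact ⟨m + i, h.vp_mem_of_vm_mem hS hi hm⟩

theorem vp_mem_of_forall_vm_mem (h : σ.IsRab vp vm a b) (hS : σ.IsSubmod S)
    (hvm : ∀ i, vm i ∈ S) {k : ℤ} (hab : a + k = 0 → b ≠ 1) : vp k ∈ S := by
  obtain ⟨m, hm⟩ := exists_int_add_mul_ne_zero (x := a + k) (y := 2 * b - 2)
    fun ha hb => hab ha (by linear_combination hb / 2)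
  have coeff_ne_zero : a + (k - m : ℤ) + (2 * b - 1) * m ≠ 0 := by
    convert hm using 1
    push_cast
    ring
  simpa using h.vp_mem_of_vm_mem hS (hvm (k - m)) coeff_ne_zero

theorem isSimple (h : σ.IsRab vp vm a b)
    (hab : ∀ k : ℤ, a + k = 0 → b ≠ 1 ∧ b ≠ 1 / 2) : σ.IsSimple := by
  refine ⟨h.not_isTrivialRep, fun S hS => or_iff_not_imp_left.2 fun hbot => ?_⟩
  obtain ⟨i, hi⟩ : ∃ i, vp i ∈ S := (h.exists_mem_of_ne_bot hS hbot).elim id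
    fun ⟨i, hi⟩ => h.exists_vp_mem_of_vm_mem hS.1 hi fun ha => (hab i ha).2
  have vm_mem := h.vm_mem_of_vp_mem hS.1 hi
  have vp_mem (k : ℤ) : vp k ∈ S := h.vp_mem_of_forall_vm_mem hS.1 vm_mem fun ha => (hab k ha).1
  rw [eq_top_iff, ← h.span_eq_top, span_le]
  exact Set.union_subset (Set.range_subset_iff.2 vp_mem) (Set.range_subset_iff.2 vm_mem)

end Simple

section NotSimple

variable {k : ℤ}

theorem isGradedSubmod_span_singleton (h : σ.IsRab vp vm k (1 / 2)) :
    σ.IsGradedSubmod (span ℂ {vm (-k)}) := by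
  refine σ.isGradedSubmod_span (Set.singleton_subset_iff.2 (.inr (h.vm_mem_odd _))) ?_ ?_ ?_ ?_ <;>
    rintro m _ rfl
  · simp [h.L_vm]
  · simp [h.H_vm]
  · simp [h.Gp_vm, show (4 * 2⁻¹ - 2 : ℂ) = 0 by norm_num]
  · simp [h.Gm_vm]

theorem isGradedSubmod_span_compl (h : σ.IsRab vp vm k 1) :
    σ.IsGradedSubmod (span ℂ (Set.range vm ∪ vp '' {-k}ᶜ)) := by
  set T := span ℂ (Set.range vm ∪ vp '' {-k}ᶜ)
  have smul_vm_mem (c : ℂ) (i : ℤ) : c • vm i ∈ T := T.smul_mem c (subset_span (.inl ⟨i, rfl⟩))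
  have smul_vp_mem (c : ℂ) (i : ℤ) (hc : (k + i : ℂ) = 0 → c = 0) : c • vp i ∈ T := by
    by_cases hi : i = -k
    · rw [hc (by simp [hi]), zero_smul]
      exact T.zero_mem
    · exact T.smul_mem c (subset_span (.inr ⟨i, hi, rfl⟩))
  refine σ.isGradedSubmod_span ?_ ?_ ?_ ?_ ?_
  · rintro _ (⟨i, rfl⟩ | ⟨i, -, rfl⟩)
    exacts [.inr (h.vm_mem_odd i), .inl (h.vp_mem_even i)]
  all_goals rintro m _ (⟨i, rfl⟩ | ⟨i, -, rfl⟩)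
  · exact h.L_vm m i ▸ smul_vm_mem _ _
  · refine h.L_vp m i ▸ smul_vp_mem _ _ fun h0 => ?_
    push_cast at h0
    linear_combination h0
  · exact h.H_vm m i ▸ smul_vm_mem _ _
  · exact h.H_vp m i ▸ smul_vp_mem _ _ fun _ => by norm_num
  · refine h.Gp_vm m i ▸ smul_vp_mem _ _ fun h0 => ?_
    push_cast at h0
    linear_combination -2 * h0
  · exact h.Gp_vp m i ▸ T.zero_mem
  · exact h.Gm_vm m i ▸ T.zero_mem
  · exact h.Gm_vp m i ▸ subset_span (.inl ⟨m + i, rfl⟩)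

theorem not_isSimple_half (h : σ.IsRab vp vm k (1 / 2)) : ¬ σ.IsSimple := fun hs =>
  (hs.2 _ h.isGradedSubmod_span_singleton).elim
    (fun hbot => h.vm_ne_zero _ (span_singleton_eq_bot.1 hbot))
    fun htop => h.vp_notMem_span 0 <|
      span_mono (Set.singleton_subset_iff.2 (.inl ⟨-k, rfl⟩)) (htop ▸ mem_top)

theorem not_isSimple_one (h : σ.IsRab vp vm k 1) : ¬ σ.IsSimple := fun hs =>
  (hs.2 _ h.isGradedSubmod_span_compl).elim
    (fun hbot => h.vm_ne_zero 0 ((mem_bot ℂ).1 (hbot ▸ subset_span (.inl ⟨0, rfl⟩))))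
    fun htop => h.vp_notMem_span (-k) (htop ▸ mem_top)

end NotSimple

end IsRab

end RamondRep

theorem stmt13_general (a b : ℂ) {W : Type} [AddCommGroup W] [Module ℂ W] (σ : RamondRep W)
    (vp vm : ℤ → W) (hRab : σ.IsRab vp vm a b) :
    ¬ σ.IsSimple ↔ (∃ k : ℤ, (k : ℂ) = a) ∧ (b = 1 ∨ b = 1 / 2) := by
  refine ⟨fun hns => ?_, ?_⟩
  · contrapose! hns
    refine hRab.isSimple fun k hk => hns ⟨-k, ?_⟩
    push_cast
    linear_combination -hk
  · rintro ⟨⟨k, rfl⟩, rfl | rfl⟩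
    · exact hRab.not_isSimple_one
    · exact hRab.not_isSimple_half

/-- for `a ∉ ℤ` or `a = 0`, the `𝔤`-module `R_{a,b}` is not simple
if and only if `a = 0, b = 1` or `a = 0, b = 1/2`. -/
theorem stmt13 (a b : ℂ) (ha : (¬ ∃ k : ℤ, (k : ℂ) = a) ∨ a = 0)
    {W : Type} [AddCommGroup W] [Module ℂ W] (σ : RamondRep W)
    (vp vm : ℤ → W) (hRab : σ.IsRab vp vm a b) :
    ¬ σ.IsSimple ↔ (a = 0 ∧ b = 1) ∨ (a = 0 ∧ b = 1 / 2) := by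
  have int_iff : (∃ k : ℤ, (k : ℂ) = a) ↔ a = 0 :=
    ⟨fun h => ha.resolve_left (not_not_intro h), fun h => ⟨0, by simp [h]⟩⟩
  rw [stmt13_general a b σ vp vm hRab, int_iff, and_or_left]
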